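/- arXiv:2012.05638 — 5 statements merged into one kernel-verified Lean document; each statement's English description precedes it below -/
import Mathlib

section
/- Let n ≥ 2 and let ω(z) = z^n + Σ_{j=0}^{n-2} c_j z^j be a monic complex polynomial of degree n with vanishing z^{n-1} coefficient. If there exists an entire function ν : ℂ → ℂ such that ω(ν(λ)) = λ^n for all λ ∈ ℂ, then c_j = 0 for all j, i.e. ω(z) = z^n. -/
/-!
Let `ω(ν(z)) = z ^ m` with `m ≠ 0`. Since `z ^ m → ∞` as `z → ∞` and `ω` is bounded on bounded
sets, `ν → ∞` as well, so an omitted value `w` of `ν` would make `1 / (ν - w)` an entire function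
vanishing at infinity, against Liouville's theorem. Hence every root of `ω` is a value of `ν`; it
can only be taken where `z ^ m = 0`, so `ν 0` is the only root of `ω`. As `ω` is monic, the
coefficient following the leading one is `-(deg ω) * ν 0`; it vanishes, so the root is `0` and `ω`
is a monomial.
-/

open Filter Function Polynomial

theorem surjective_of_tendsto_cocompact {E : Type*} [NormedAddCommGroup E] [NormedSpace ℂ E]
    [Nontrivial E] {f : E → ℂ} (hf : Differentiable ℂ f)
    (hlim : Tendsto f (cocompact E) (cocompact ℂ)) : Surjective f := by
  intro w
  by_contra! hw
  have hne (z : E) : f z - w ≠ 0 := sub_ne_zero.2 (hw z)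
  have hinv : Differentiable ℂ fun z ↦ (f z - w)⁻¹ := (hf.sub_const w).inv hne
  have hinv_lim : Tendsto (fun z ↦ (f z - w)⁻¹) (cocompact E) (nhds 0) := by
    rw [← Metric.cobounded_eq_cocompact (α := ℂ)] at hlim
    exact tendsto_inv₀_cobounded.comp ((tendsto_sub_const_cobounded w).comp hlim)
  exact inv_ne_zero (hne 0) (hinv.apply_eq_of_tendsto_cocompact 0 hinv_lim)

theorem tendsto_cocompact_of_comp {α X Y : Type*} [TopologicalSpace X] [TopologicalSpace Y]
    {g : X → Y} (hg : Continuous g) {f : α → X} {l : Filter α}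
    (h : Tendsto (g ∘ f) l (cocompact Y)) : Tendsto f l (cocompact X) :=
  (tendsto_comap_iff.2 h).mono_right (comap_cocompact_le hg)

theorem eq_apply_zero_of_comp_eq_pow {g : ℂ → ℂ} (hg : Continuous g) {ν : ℂ → ℂ}
    (hν : Differentiable ℂ ν) {m : ℕ} (hm : m ≠ 0) (h : ∀ z, g (ν z) = z ^ m) {w : ℂ}
    (hw : g w = 0) : w = ν 0 := by
  have hcomp : Tendsto (g ∘ ν) (cocompact ℂ) (cocompact ℂ) := by
    simpa only [comp_def, h, Metric.cobounded_eq_cocompact] using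
      tendsto_pow_cobounded_cobounded (α := ℂ) hm
  have hsurj : Surjective ν :=
    surjective_of_tendsto_cocompact hν (tendsto_cocompact_of_comp hg hcomp)
  obtain ⟨z, rfl⟩ := hsurj w
  have hz : z = 0 := eq_zero_of_pow_eq_zero ((h z).symm.trans hw)
  rw [hz]

section Polynomial

variable {R : Type*} [CommRing R]

theorem eq_X_sub_C_pow_of_forall_isRoot_eq [IsDomain R] {p : R[X]} (hp : p.Monic)
    (hs : p.Splits) {b : R} (hb : ∀ x, p.IsRoot x → x = b) : p = (X - C b) ^ p.natDegree := by
  have hroots : p.roots = Multiset.replicate p.natDegree b :=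
    Multiset.eq_replicate.2 ⟨hs.natDegree_eq_card_roots.symm,
      fun x hx ↦ hb x (isRoot_of_mem_roots hx)⟩
  conv_lhs => rw [hs.eq_prod_roots_of_monic hp, hroots]
  simp only [Multiset.map_replicate, Multiset.prod_replicate]

theorem eq_X_pow_of_nextCoeff_eq_zero [IsDomain R] [CharZero R] {p : R[X]} (hp : p.Monic)
    (hs : p.Splits) {b : R} (hb : ∀ x, p.IsRoot x → x = b) (hnext : p.nextCoeff = 0) :
    p = X ^ p.natDegree := by
  have hpow := eq_X_sub_C_pow_of_forall_isRoot_eq hp hs hb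
  have hmul : p.natDegree • -b = 0 := by
    rw [← nextCoeff_X_sub_C, ← (monic_X_sub_C b).nextCoeff_pow, ← hpow, hnext]
  rcases smul_eq_zero.1 hmul with hdeg | hb0
  · rw [hdeg, pow_zero] at hpow ⊢
    exact hpow
  · rwa [neg_eq_zero.1 hb0, C_0, sub_zero] at hpow

/-- The monic polynomial `X ^ n + ∑ j < n - 1, c j * X ^ j`, which has no term of degree `n - 1`.
Subtraction of natural numbers is truncated, so `n = 0` and `n = 1` give the empty sum. -/
noncomputable def depressedPoly (n : ℕ) (c : ℕ → R) : R[X] :=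
  X ^ n + ∑ j ∈ Finset.range (n - 1), C (c j) * X ^ j

namespace depressedPoly

variable (n : ℕ) (c : ℕ → R)

theorem eval_eq (x : R) :
    (depressedPoly n c).eval x = x ^ n + ∑ j ∈ Finset.range (n - 1), c j * x ^ j := by
  simp [depressedPoly, eval_finsetSum]

theorem coeff_eq (k : ℕ) :
    (depressedPoly n c).coeff k = (if k = n then 1 else 0) + if k < n - 1 then c k else 0 := by
  simp [depressedPoly, coeff_X_pow]

theorem natDegree_le : (depressedPoly n c).natDegree ≤ n := by
  refine natDegree_le_iff_coeff_eq_zero.2 fun k hk ↦ ?_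
  rw [coeff_eq, if_neg (by lia), if_neg (by lia), add_zero]

theorem coeff_self : (depressedPoly n c).coeff n = 1 := by
  rw [coeff_eq, if_pos rfl, if_neg (by lia), add_zero]

theorem monic : (depressedPoly n c).Monic :=
  monic_of_natDegree_le_of_coeff_eq_one n (natDegree_le n c) (coeff_self n c)

theorem natDegree_eq [Nontrivial R] : (depressedPoly n c).natDegree = n :=
  natDegree_eq_of_le_of_coeff_ne_zero (natDegree_le n c) (by simp [coeff_self])

theorem nextCoeff_eq_zero [Nontrivial R] : (depressedPoly n c).nextCoeff = 0 := by
  rw [nextCoeff, natDegree_eq]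
  split_ifs with hn
  · rfl
  · rw [coeff_eq, if_neg (by lia), if_neg (by lia), add_zero]

end depressedPoly

end Polynomial

theorem stmt5_general {n m : ℕ} (hm : m ≠ 0) {c : ℕ → ℂ} {ν : ℂ → ℂ} (hν : Differentiable ℂ ν)
    (hω : ∀ z, ν z ^ n + ∑ j ∈ Finset.range (n - 1), c j * ν z ^ j = z ^ m) :
    ∀ j ∈ Finset.range (n - 1), c j = 0 := by
  have heval (z : ℂ) : (depressedPoly n c).eval (ν z) = z ^ m := by rw [depressedPoly.eval_eq, hω]
  have hmonomial : depressedPoly n c = X ^ n := by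
    simpa only [depressedPoly.natDegree_eq] using
      eq_X_pow_of_nextCoeff_eq_zero (depressedPoly.monic n c) (IsAlgClosed.splits _)
        (fun _ hw ↦ eq_apply_zero_of_comp_eq_pow (depressedPoly n c).continuous hν hm heval hw)
        (depressedPoly.nextCoeff_eq_zero n c)
  intro j hj
  have hjn : j < n - 1 := Finset.mem_range.1 hj
  have hcoeff := congrArg (fun p ↦ p.coeff j) hmonomial
  simpa [depressedPoly.coeff_eq, coeff_X_pow, hjn, show j ≠ n by lia] using hcoeff

/-- If the branch `ν` of `ω(ν(λ)) = λ^n` extends to an entire function,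
then `ω` is the monomial `z^n`, i.e. all lower-order coefficients vanish. -/
theorem stmt5 (n : ℕ) (hn : 2 ≤ n) (c : ℕ → ℂ) (ν : ℂ → ℂ)
    (hν : Differentiable ℂ ν)
    (hω : ∀ z : ℂ,
      (ν z) ^ n + ∑ j ∈ Finset.range (n - 1), c j * (ν z) ^ j = z ^ n) :
    ∀ j ∈ Finset.range (n - 1), c j = 0 :=
  stmt5_general (by lia) hν hω
end

section
/- Let n ≥ 1, λ ∈ ℂ, α = exp(2πi/n), and let ν : ℂ → ℂ be any function; write ν_j = ν(α^{j−1}λ) for j = 1, …, n (so ν₁ = ν(λ)), and let w ∈ ℂ. Let b⋆, β⋆ be n×n complex matrices and define n×n matrices M⁺, M⁻, M by M⁺_{jk} = Σ_{ℓ=1}^{n} conj(b⋆_{kℓ}) · (−i ν_j)^{ℓ−1}, M⁻_{jk} = e^{−i ν_j} · Σ_{ℓ=1}^{n} conj(β⋆_{kℓ}) · (−i ν_j)^{ℓ−1}, and M = M⁺ + M⁻; set Δ = det M and assume Δ ≠ 0. For j, k ∈ {1, …, n} let X_{jk} denote the cyclic minor of M (the (N−1)×(N−1) submatrix of [[M,M],[M,M]]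 whose top-left entry is the (j+1, k+1) entry of its parent, with N = n). Let φ : ℝ → ℂ be integrable on (0,1) and define F^±φ = (± w / (2π Δ)) · Σ_{j=1}^{n} Σ_{k=1}^{n} (−1)^{(n−1)(j+k)} · det(X_{jk}) · M^±_{1k} · ∫₀¹ e^{−i ν_j x} φ(x) dx. Then F⁺φ − F⁻φ = (w / 2π) · ∫₀¹ e^{−i ν(λ) x} φ(x) dx. -/
open MeasureTheory

/-!
With the sign `(-1) ^ ((n - 1) * (j + k))`, the determinant of the cyclic submatrix `X j k` of `M`
is the `(j, k)` cofactor of `M`: rotating the rows by `j` and the columns by `k` moves the entry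
`(j, k)` to the corner, and a rotation by one step is a cycle of length `n`, of sign
`(-1) ^ (n - 1)`. Hence each double sum is an entry of `(M± * adjugate M) *ᵥ I`, where `I` is the
vector of integrals, and the two add up to an entry of `(M * adjugate M) *ᵥ I = det M • I`.
-/

theorem sign_finCycle {n : ℕ} (k : Fin n) :
    Equiv.Perm.sign (finCycle k) = (-1) ^ ((n - 1) * (k : ℕ)) := by
  have finCycle_eq_pow : finCycle k = finRotate n ^ (k : ℕ) :=
    DFunLike.coe_injective (finCycle_eq_finRotate_iterate.trans (Equiv.Perm.coe_pow _ _).symm)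
  rw [finCycle_eq_pow, map_pow, sign_finRotate, ← pow_mul]

/-- The submatrix of `M` formed by the `n - 1` rows that cyclically follow row `j` and the `n - 1`
columns that cyclically follow column `k`, in cyclic order. It is the cyclic minor `X j k` of the
paper, there cut out of the block matrix `[[M, M], [M, M]]`; here indices are reduced modulo `n`. -/
def cyclicSubmatrix {α : Type*} {n : ℕ} (M : Matrix (Fin n) (Fin n) α) (j k : Fin n) :
    Matrix (Fin (n - 1)) (Fin (n - 1)) α :=
  M.submatrix (fun p ↦ ⟨(j + 1 + p) % n, Nat.mod_lt _ j.pos⟩)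
    (fun q ↦ ⟨(k + 1 + q) % n, Nat.mod_lt _ k.pos⟩)

theorem cyclicSubmatrix_succ {α : Type*} {n : ℕ} (M : Matrix (Fin (n + 1)) (Fin (n + 1)) α)
    (j k : Fin (n + 1)) :
    cyclicSubmatrix M j k =
      (M.submatrix (finCycle j) (finCycle k)).submatrix Fin.succ Fin.succ := by
  have finCycle_succ (i : Fin (n + 1)) (p : Fin n) :
      (⟨(i + 1 + p) % (n + 1), Nat.mod_lt _ i.pos⟩ : Fin (n + 1)) = finCycle i p.succ := by
    ext
    simp only [finCycle_apply, Fin.val_add, Fin.val_succ, add_comm, add_left_comm]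
  ext p q
  exact congrArg₂ M (finCycle_succ j p) (finCycle_succ k q)

section CommRing

variable {R : Type*} [CommRing R]

theorem det_submatrix_perm_perm {m : Type*} [Fintype m] [DecidableEq m] (A : Matrix m m R)
    (σ τ : Equiv.Perm m) :
    (A.submatrix σ τ).det = σ.sign * τ.sign * A.det := by
  calc (A.submatrix σ τ).det
      = ((A.submatrix id τ).submatrix σ id).det := rfl
    _ = σ.sign * τ.sign * A.det := by rw [Matrix.det_permute, Matrix.det_permute', mul_assoc]

theorem adjugate_submatrix_perm_perm {m : Type*} [Fintype m] [DecidableEq m] (A : Matrix m m R)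
    (σ τ : Equiv.Perm m) (i j : m) :
    (A.submatrix σ τ).adjugate i j = σ.sign * τ.sign * A.adjugate (τ i) (σ j) := by
  have single_comp_symm :
      (fun k ↦ (Pi.single i 1 : m → R) (τ.symm k)) = Pi.single (τ i) 1 := by
    ext k
    simp only [Pi.single_apply, Equiv.symm_apply_eq]
  rw [Matrix.adjugate_apply, Matrix.updateRow_submatrix_equiv, single_comp_symm,
    det_submatrix_perm_perm, Matrix.adjugate_apply]

variable {n : ℕ}

/-- The coefficient of `M± 1 k` times the `j`-th integral in the Fokas forward transforms: the
determinant of a cyclic submatrix with its sign. Indices start at `0` here and at `1` in the paper,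
which changes `j + k` by `2` and so leaves the sign unchanged. -/
def cyclicCofactor (M : Matrix (Fin n) (Fin n) R) (j k : Fin n) : R :=
  (-1) ^ ((n - 1) * ((j : ℕ) + k)) * (cyclicSubmatrix M j k).det

theorem cyclicCofactor_eq_adjugate (M : Matrix (Fin n) (Fin n) R) (j k : Fin n) :
    cyclicCofactor M j k = M.adjugate k j := by
  obtain _ | m := n
  · exact j.elim0
  have det_cyclicSubmatrix :
      (cyclicSubmatrix M j k).det = (-1) ^ (m * ((j : ℕ) + k)) * M.adjugate k j := by
    calc (cyclicSubmatrix M j k).det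
        = (M.submatrix (finCycle j) (finCycle k)).adjugate 0 0 := by
          simp [cyclicSubmatrix_succ, Matrix.adjugate_fin_succ_eq_det_submatrix]
      _ = (-1) ^ (m * ((j : ℕ) + k)) * M.adjugate k j := by
          simp [adjugate_submatrix_perm_perm, sign_finCycle, mul_add, pow_add]
  rw [cyclicCofactor, det_cyclicSubmatrix, add_tsub_cancel_right, ← mul_assoc, ← mul_pow,
    neg_one_mul, neg_neg, one_pow, one_mul]

theorem sum_cyclicCofactor_mul_mul {l : Type*} (M : Matrix (Fin n) (Fin n) R)
    (P : Matrix l (Fin n) R) (v : Fin n → R) (i : l) :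
    ∑ j, ∑ k, cyclicCofactor M j k * P i k * v j = ((P * M.adjugate).mulVec v) i := by
  simp only [Matrix.mulVec, dotProduct, Matrix.mul_apply, Finset.sum_mul,
    cyclicCofactor_eq_adjugate, mul_comm (P i _)]

theorem sum_cyclicCofactor_add_sum_cyclicCofactor (P Q : Matrix (Fin n) (Fin n) R) (v : Fin n → R)
    (i : Fin n) :
    ∑ j, ∑ k, cyclicCofactor (P + Q) j k * P i k * v j +
      ∑ j, ∑ k, cyclicCofactor (P + Q) j k * Q i k * v j = (P + Q).det * v i := by
  rw [sum_cyclicCofactor_mul_mul, sum_cyclicCofactor_mul_mul, ← Pi.add_apply, ← Matrix.add_mulVec,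
    ← add_mul, Matrix.mul_adjugate, Matrix.smul_mulVec, Matrix.one_mulVec, Pi.smul_apply,
    smul_eq_mul]

end CommRing

theorem stmt9_general {K : Type*} [Field K] {n : ℕ} (P Q : Matrix (Fin n) (Fin n) K)
    (hdet : (P + Q).det ≠ 0) (c : K) (v : Fin n → K) (i : Fin n) :
    c / (P + Q).det * ∑ j, ∑ k, cyclicCofactor (P + Q) j k * P i k * v j -
      -c / (P + Q).det * ∑ j, ∑ k, cyclicCofactor (P + Q) j k * Q i k * v j = c * v i := by
  rw [neg_div, neg_mul, sub_neg_eq_add, ← mul_add, sum_cyclicCofactor_add_sum_cyclicCofactor,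
    ← mul_assoc, div_mul_cancel₀ _ hdet]

/-- Lemma 3.6 (transform cancellation): the difference of the left and right Fokas
forward transforms equals `(ν'(λ)/2π)` times the formal transform of `φ` at `λ`. -/
theorem stmt9 (n : ℕ) (hn : 1 ≤ n) (lam : ℂ) (ν : ℂ → ℂ) (w : ℂ)
    (α : ℂ) (hα : α = Complex.exp (2 * (Real.pi : ℂ) * Complex.I / (n : ℂ)))
    (νj : Fin n → ℂ) (hνj : ∀ j : Fin n, νj j = ν (α ^ (j : ℕ) * lam))
    (bstar βstar : Matrix (Fin n) (Fin n) ℂ)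
    (Mp Mm M : Matrix (Fin n) (Fin n) ℂ)
    (hMp : ∀ j k, Mp j k =
      ∑ ℓ : Fin n, (starRingEnd ℂ) (bstar k ℓ) * (-Complex.I * νj j) ^ (ℓ : ℕ))
    (hMm : ∀ j k, Mm j k = Complex.exp (-Complex.I * νj j) *
      ∑ ℓ : Fin n, (starRingEnd ℂ) (βstar k ℓ) * (-Complex.I * νj j) ^ (ℓ : ℕ))
    (hM : M = Mp + Mm)
    (hΔ : M.det ≠ 0)
    (X : Fin n → Fin n → Matrix (Fin (n - 1)) (Fin (n - 1)) ℂ)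
    (hX : ∀ (j k : Fin n) (p q : Fin (n - 1)),
      X j k p q = M ⟨(j.1 + 1 + p.1) % n, Nat.mod_lt _ (by omega)⟩
                    ⟨(k.1 + 1 + q.1) % n, Nat.mod_lt _ (by omega)⟩)
    (φ : ℝ → ℂ) (hφ : IntervalIntegrable φ volume 0 1)
    (Fp Fm : ℂ)
    (hFp : Fp = w / (2 * (Real.pi : ℂ) * M.det) *
      ∑ j : Fin n, ∑ k : Fin n, (-1 : ℂ) ^ ((n - 1) * (j.1 + k.1)) * (X j k).det *
        Mp ⟨0, hn⟩ k * ∫ t in (0 : ℝ)..1, Complex.exp (-Complex.I * νj j * t) * φ t)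
    (hFm : Fm = -w / (2 * (Real.pi : ℂ) * M.det) *
      ∑ j : Fin n, ∑ k : Fin n, (-1 : ℂ) ^ ((n - 1) * (j.1 + k.1)) * (X j k).det *
        Mm ⟨0, hn⟩ k * ∫ t in (0 : ℝ)..1, Complex.exp (-Complex.I * νj j * t) * φ t) :
    Fp - Fm = w / (2 * (Real.pi : ℂ)) *
      ∫ t in (0 : ℝ)..1, Complex.exp (-Complex.I * ν lam * t) * φ t := by
  obtain rfl : X = cyclicSubmatrix M := by
    ext j k p q
    exact hX j k p q
  subst hM hFp hFm
  have νj_zero : νj ⟨0, hn⟩ = ν lam := by rw [hνj, pow_zero, one_mul]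
  simpa only [cyclicCofactor, νj_zero, div_div, neg_div] using
    stmt9_general Mp Mm hΔ (w / (2 * (Real.pi : ℂ)))
      (fun j ↦ ∫ t in (0 : ℝ)..1, Complex.exp (-Complex.I * νj j * t) * φ t) ⟨0, hn⟩
end

section
/- Let N ≥ 1, let 0 ≤ ℓ ≤ 2N, let S be an invertible 2N×2N complex matrix, let 𝔅 be an ℓ×2N complex matrix of rank ℓ, and let ℨ be a (2N−ℓ)×2N complex matrix of rank 2N−ℓ. Then the following are equivalent: (i) 𝔅 · S^{-1} · ℨᴴ = 0 (the zero ℓ×(2N−ℓ) matrix); (ii) for all u, v ∈ ℂ^{2N}, if 𝔅 u = 0 and ℨ v = 0 then (S u) ⊙ v = 0. -/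
open Matrix

/-- The sesquilinear dot product `u ⊙ v = Σ_i u_i conj(v_i)`. -/
noncomputable def sesq {ι : Type*} [Fintype ι] (u v : ι → ℂ) : ℂ :=
  ∑ i, u i * (starRingEnd ℂ) (v i)

/-!
Condition (i) says that the range of `Zᴴ` is contained in the kernel of `B * S⁻¹`. The range of `Zᴴ`
is the orthogonal complement of the kernel of `Z`, and `S` maps the kernel of `B` onto the kernel of
`B * S⁻¹`, so condition (ii) is the reverse inclusion. The rank hypotheses say that the two
subspaces have the same dimension, hence either inclusion implies the other.
-/

theorem submodule_le_comm_of_finrank_eq {K V : Type*} [DivisionRing K] [AddCommGroup V] [Module K V]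
    [FiniteDimensional K V] {P Q : Submodule K V}
    (h : Module.finrank K P = Module.finrank K Q) : P ≤ Q ↔ Q ≤ P :=
  ⟨fun hPQ => (Submodule.eq_of_le_of_finrank_eq hPQ h).ge,
    fun hQP => (Submodule.eq_of_le_of_finrank_eq hQP h.symm).ge⟩

section CommSemiring

variable {R l m n : Type*} [CommSemiring R] [Fintype n]

theorem mul_eq_zero_iff_range_le_ker [Fintype m] {A : Matrix l n R} {B : Matrix n m R} :
    A * B = 0 ↔ LinearMap.range B.mulVecLin ≤ LinearMap.ker A.mulVecLin := by
  classical
  rw [LinearMap.range_le_ker_iff, ← mulVecLin_mul, ← toLin'_apply', map_eq_zero_iff _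
    toLin'.injective]

variable [StarRing R]

theorem map_star_mulVec (A : Matrix m n R) (v : n → R) : A.map star *ᵥ star v = star (A *ᵥ v) :=
  funext fun i => ((starRingEnd R).map_mulVec A v i).symm

theorem rank_map_star (A : Matrix m n R) : (A.map star).rank = A.rank := by
  have hmap : (LinearMap.range A.mulVecLin).map (starLinearEquiv R (A := m → R)).toLinearMap =
      LinearMap.range (A.map star).mulVecLin := by
    ext w
    simp only [Submodule.mem_map, LinearMap.mem_range, exists_exists_eq_and, mulVecLin_apply,
      (star_involutive (R := n → R)).surjective.exists (p := fun v => A.map star *ᵥ v = w),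
      map_star_mulVec]
    rfl
  let e := (starLinearEquiv R (A := m → R)).submoduleMap (LinearMap.range A.mulVecLin)
  have hrank := rank_eq_of_equiv_equiv (starRingEnd R) e.toAddEquiv (starRingAut (R := R)).bijective
    fun c w => e.map_smulₛₗ c w
  rw [Matrix.rank, ← hmap]
  exact congrArg Cardinal.toNat hrank.symm

end CommSemiring

section Field

variable {K l m n : Type*} [Field K] [Fintype n]

theorem finrank_ker_mulVecLin_add_rank (A : Matrix l n K) :
    Module.finrank K (LinearMap.ker A.mulVecLin) + A.rank = Fintype.card n := by
  rw [add_comm, Matrix.rank, LinearMap.finrank_range_add_finrank_ker, Module.finrank_pi]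

theorem mem_range_transpose_mulVecLin_iff [Fintype m] {A : Matrix m n K} {w : n → K} :
    w ∈ LinearMap.range Aᵀ.mulVecLin ↔ ∀ v, A *ᵥ v = 0 → w ⬝ᵥ v = 0 := by
  classical
  have hdual (y : m → K) : dotProductEquiv K n (Aᵀ *ᵥ y) =
      A.mulVecLin.dualMap (dotProductEquiv K m y) := by
    refine LinearMap.ext fun v => ?_
    simp [mulVec_transpose, dotProduct_mulVec]
  have hrange : w ∈ LinearMap.range Aᵀ.mulVecLin ↔
      dotProductEquiv K n w ∈ LinearMap.range A.mulVecLin.dualMap := by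
    simp only [LinearMap.mem_range, (dotProductEquiv K m).surjective.exists, ← hdual,
      (dotProductEquiv K n).injective.eq_iff, mulVecLin_apply]
  rw [hrange, LinearMap.range_dualMap_eq_dualAnnihilator_ker, Submodule.mem_dualAnnihilator]
  rfl

theorem mul_transpose_eq_zero_iff_ker_orthogonal [Finite m] {A : Matrix l n K}
    {B : Matrix m n K} (hrank : A.rank + B.rank = Fintype.card n) :
    A * Bᵀ = 0 ↔ ∀ u v, A *ᵥ u = 0 → B *ᵥ v = 0 → u ⬝ᵥ v = 0 := by
  have := Fintype.ofFinite m
  have hfinrank : Module.finrank K (LinearMap.range Bᵀ.mulVecLin) =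
      Module.finrank K (LinearMap.ker A.mulVecLin) := by
    have hker := finrank_ker_mulVecLin_add_rank A
    rw [← Matrix.rank, rank_transpose]
    omega
  calc A * Bᵀ = 0
      ↔ LinearMap.range Bᵀ.mulVecLin ≤ LinearMap.ker A.mulVecLin := mul_eq_zero_iff_range_le_ker
    _ ↔ LinearMap.ker A.mulVecLin ≤ LinearMap.range Bᵀ.mulVecLin :=
        submodule_le_comm_of_finrank_eq hfinrank
    _ ↔ ∀ u v, A *ᵥ u = 0 → B *ᵥ v = 0 → u ⬝ᵥ v = 0 := by
        simp only [SetLike.le_def, mem_range_transpose_mulVecLin_iff, LinearMap.mem_ker,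
          mulVecLin_apply]
        exact forall_congr' fun u => forall_comm

variable [StarRing K]

theorem mul_conjTranspose_eq_zero_iff_ker_orthogonal [Finite m] {A : Matrix l n K}
    {B : Matrix m n K} (hrank : A.rank + B.rank = Fintype.card n) :
    A * Bᴴ = 0 ↔ ∀ u v, A *ᵥ u = 0 → B *ᵥ v = 0 → u ⬝ᵥ star v = 0 := by
  rw [← rank_map_star B] at hrank
  rw [conjTranspose, transpose_map, mul_transpose_eq_zero_iff_ker_orthogonal hrank]
  refine forall_congr' fun u => (star_involutive (R := n → K)).surjective.forall.trans ?_
  simp only [map_star_mulVec, star_eq_zero]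

theorem stmt13_general [Finite m] [DecidableEq n] {S : Matrix n n K}
    (hS : IsUnit S.det) {B : Matrix l n K} {Z : Matrix m n K}
    (hrank : B.rank + Z.rank = Fintype.card n) :
    B * S⁻¹ * Zᴴ = 0 ↔ ∀ u v, B *ᵥ u = 0 → Z *ᵥ v = 0 → (S *ᵥ u) ⬝ᵥ star v = 0 := by
  have hS_surj : Function.Surjective S.mulVec :=
    mulVec_surjective_iff_isUnit.mpr ((isUnit_iff_isUnit_det S).mpr hS)
  have hBS (u : n → K) : (B * S⁻¹) *ᵥ (S *ᵥ u) = B *ᵥ u := by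
    rw [mulVec_mulVec, nonsing_inv_mul_cancel_right S B hS]
  rw [← rank_mul_eq_left_of_isUnit_det S⁻¹ B (isUnit_nonsing_inv_det S hS)] at hrank
  rw [mul_conjTranspose_eq_zero_iff_ker_orthogonal hrank, hS_surj.forall]
  simp only [hBS]

end Field

/-- Theorem A.5 (checking adjointness), matrix form: `𝔅 S⁻¹ ℨᴴ = 0` iff the Lagrange
boundary term `(Su) ⊙ v` vanishes whenever `𝔅u = 0` and `ℨv = 0`. -/
theorem stmt13 (N ℓ : ℕ) (hN : 1 ≤ N) (hℓ : ℓ ≤ 2 * N)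
    (S : Matrix (Fin (2 * N)) (Fin (2 * N)) ℂ) (hS : IsUnit S.det)
    (B : Matrix (Fin ℓ) (Fin (2 * N)) ℂ) (hB : B.rank = ℓ)
    (Z : Matrix (Fin (2 * N - ℓ)) (Fin (2 * N)) ℂ) (hZ : Z.rank = 2 * N - ℓ) :
    B * S⁻¹ * Zᴴ = 0 ↔
      ∀ u v : Fin (2 * N) → ℂ, B.mulVec u = 0 → Z.mulVec v = 0 →
        sesq (S.mulVec u) v = 0 :=
  stmt13_general hS (by rw [hB, hZ, Fintype.card_fin, Nat.add_sub_cancel' hℓ])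
end

section
/- Let Λ be a type, a ∈ ℂ, z : Λ → ℂ, and T > 0. Let F and R be ℂ-linear maps from the space of functions ℝ → ℂ to the space of functions Λ → ℂ, let L be a ℂ-linear endomorphism of the space of functions ℝ → ℂ, and let G be a ℂ-linear map from the space of functions Λ → ℂ to the space of functions ℝ → ℂ. Let q : ℝ → (ℝ → ℂ) and set Q = q(0). Assume: (i) for every t ∈ [0,T], F(L(q t)) = (λ ↦ z(λ)·F(q t)(λ) + R(q t)(λ)); (ii) for every λ ∈ Λ and every t ∈ [0,T], the function s ↦ F(q s)(λ) has derivative −a · F(L(q t))(λ) at s = t; (iii) for every λ ∈ Λ and t ∈ [0,T], the function s ↦ e^{a·z(λ)·s} · R(q s)(λ) is integrable on [0,t]; (iv) for every t ∈ [0,T] and every x ∈ (0,1), G(λ ↦ ∫₀ᵗ e^{a·z(λ)·(s−t)} · R(q s)(λ) ds)(x) = 0; (v) for every t ∈ [0,T] and every x ∈ (0,1), G(F(q t))(x) = q t x. Then for every t ∈ [0,T] and every x ∈ (0,1), q t x = G(λ ↦ e^{−a·z(λ)·t} · F(Q)(λ))(x). -/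
open MeasureTheory

/-! For each spectral parameter `λ`, the forward transform `y t = F (q t) λ` solves the linear
equation `y' = -a z(λ) y - a R(q) λ`. Duhamel's formula therefore splits `F (q t)` into the free
evolution `e^{-azt} F (q 0)` and a multiple of an integral that `G` annihilates by remainder
control, so applying `G` and inverting leaves only the free evolution. -/

section Duhamel

variable {E : Type*} [NormedAddCommGroup E]

theorem intervalIntegrable_smul_iff_of_continuousOn {𝕜 : Type*} [NormedField 𝕜] [NormedSpace 𝕜 E]
    {μ : Measure ℝ} {w : ℝ → 𝕜} {f : ℝ → E} {b c : ℝ} (hw : ContinuousOn w (Set.uIcc b c))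
    (hw₀ : ∀ s ∈ Set.uIcc b c, w s ≠ 0) :
    IntervalIntegrable (fun s => w s • f s) μ b c ↔ IntervalIntegrable f μ b c := by
  refine ⟨fun hwf => ?_, fun hf => hf.continuousOn_smul hw⟩
  refine (hwf.continuousOn_smul (hw.inv₀ hw₀)).congr fun s hs => ?_
  exact inv_smul_smul₀ (hw₀ s (Set.uIoc_subset_uIcc hs)) (f s)

theorem integral_eq_sub_of_hasDerivWithinAt [NormedSpace ℝ E] [CompleteSpace E] {f f' : ℝ → E}
    {b c : ℝ} (hderiv : ∀ s ∈ Set.uIcc b c, HasDerivWithinAt f (f' s) (Set.uIcc b c) s)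
    (hint : IntervalIntegrable f' volume b c) :
    ∫ s in b..c, f' s = f c - f b := by
  refine intervalIntegral.integral_eq_sub_of_hasDeriv_right
    (HasDerivWithinAt.continuousOn hderiv) (fun s hs => ?_) hint
  have hs_nhds : Set.uIcc b c ∈ nhds s := Icc_mem_nhds hs.1 hs.2
  exact ((hderiv s (mem_of_mem_nhds hs_nhds)).hasDerivAt hs_nhds).hasDerivWithinAt

variable [NormedSpace ℂ E]

theorem hasDerivAt_cexp_mul_sub (k : ℂ) (t s : ℝ) :
    HasDerivAt (fun r : ℝ => Complex.exp (k * (t - r))) (-(k * Complex.exp (k * (t - s)))) s := by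
  have h_arg : HasDerivAt (fun r : ℝ => k * ((t : ℂ) - r)) (k * -1) s :=
    (Complex.ofRealCLM.hasDerivAt.const_sub (t : ℂ)).const_mul k
  exact h_arg.cexp.congr_deriv (by ring)

theorem hasDerivWithinAt_cexp_smul {k : ℂ} {y : ℝ → E} {v : E} {S : Set ℝ} {s : ℝ} (t : ℝ)
    (hy : HasDerivWithinAt y (k • y s + v) S s) :
    HasDerivWithinAt (fun r : ℝ => Complex.exp (k * (t - r)) • y r)
      (Complex.exp (k * (t - s)) • v) S s := by
  refine ((hasDerivAt_cexp_mul_sub k t s).hasDerivWithinAt.smul hy).congr_deriv ?_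
  module

theorem eq_cexp_smul_add_integral_of_hasDerivWithinAt [CompleteSpace E] {k : ℂ} {y f : ℝ → E}
    {t₀ t : ℝ} (hy : ∀ s ∈ Set.uIcc t₀ t, HasDerivWithinAt y (k • y s + f s) (Set.uIcc t₀ t) s)
    (hf : IntervalIntegrable f volume t₀ t) :
    y t = Complex.exp (k * (t - t₀)) • y t₀
      + ∫ s in t₀..t, Complex.exp (k * (t - s)) • f s := by
  have hint : IntervalIntegrable (fun s : ℝ => Complex.exp (k * (t - s)) • f s) volume t₀ t :=
    hf.continuousOn_smul (by fun_prop)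
  rw [integral_eq_sub_of_hasDerivWithinAt (fun s hs => hasDerivWithinAt_cexp_smul t (hy s hs)) hint,
    sub_self, mul_zero, Complex.exp_zero, one_smul, add_sub_cancel]

end Duhamel

section TransformMethod

variable {Λ E : Type*} [NormedAddCommGroup E] [NormedSpace ℂ E] [CompleteSpace E]

theorem transform_eq_cexp_smul_sub_smul_integral {Y : Type*} {a : ℂ} {z : Λ → ℂ} {t : ℝ}
    (ht : 0 ≤ t) {F R : Y → Λ → E} {L : Y → Y} {q : ℝ → Y}
    (h_diag : ∀ s ∈ Set.Icc 0 t, F (L (q s)) = fun lam => z lam • F (q s) lam + R (q s) lam)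
    (h_evol : ∀ lam, ∀ s ∈ Set.Icc 0 t,
      HasDerivWithinAt (fun r => F (q r) lam) (-a • F (L (q s)) lam) (Set.Icc 0 t) s)
    (h_int : ∀ lam, IntervalIntegrable (fun s => R (q s) lam) volume 0 t) :
    F (q t) = (fun lam => Complex.exp (-a * z lam * t) • F (q 0) lam)
      - a • fun lam => ∫ s in (0 : ℝ)..t, Complex.exp (a * z lam * (s - t)) • R (q s) lam := by
  funext lam
  have h_ode : ∀ s ∈ Set.uIcc 0 t, HasDerivWithinAt (fun r => F (q r) lam)
      ((-a * z lam) • F (q s) lam + -a • R (q s) lam) (Set.uIcc 0 t) s := by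
    rw [Set.uIcc_of_le ht]
    intro s hs
    refine (h_evol lam s hs).congr_deriv ?_
    rw [h_diag s hs, smul_add, smul_smul]
  have h_integral : ∫ s in (0 : ℝ)..t, Complex.exp (-a * z lam * (t - s)) • -a • R (q s) lam
      = -a • ∫ s in (0 : ℝ)..t, Complex.exp (a * z lam * (s - t)) • R (q s) lam := by
    rw [← intervalIntegral.integral_smul]
    refine intervalIntegral.integral_congr fun s _ => ?_
    rw [smul_comm, show -a * z lam * ((t : ℂ) - s) = a * z lam * (s - t) by ring]
  rw [eq_cexp_smul_add_integral_of_hasDerivWithinAt h_ode ((h_int lam).smul (-a)), h_integral,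
    Complex.ofReal_zero, sub_zero, neg_smul, ← sub_eq_add_neg]
  rfl

theorem stmt15_general {X V : Type*} [AddCommGroup V] [Module ℂ V] {a : ℂ} {z : Λ → ℂ} {T : ℝ}
    {U : Set X} {F R : (X → V) → Λ → E} {L : (X → V) → X → V} {G : (Λ → E) →ₗ[ℂ] (X → V)}
    {q : ℝ → X → V}
    (h_diag : ∀ t ∈ Set.Icc 0 T, F (L (q t)) = fun lam => z lam • F (q t) lam + R (q t) lam)
    (h_evol : ∀ lam, ∀ t ∈ Set.Icc 0 T,
      HasDerivWithinAt (fun s => F (q s) lam) (-a • F (L (q t)) lam) (Set.Icc 0 T) t)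
    (h_int : ∀ lam, ∀ t ∈ Set.Icc 0 T, IntervalIntegrable
      (fun s => Complex.exp (a * z lam * s) • R (q s) lam) volume 0 t)
    (h_control : ∀ t ∈ Set.Icc 0 T, ∀ x ∈ U,
      G (fun lam => ∫ s in (0 : ℝ)..t, Complex.exp (a * z lam * (s - t)) • R (q s) lam) x = 0)
    (h_inv : ∀ t ∈ Set.Icc 0 T, ∀ x ∈ U, G (F (q t)) x = q t x) :
    ∀ t ∈ Set.Icc 0 T, ∀ x ∈ U,
      q t x = G (fun lam => Complex.exp (-a * z lam * t) • F (q 0) lam) x := by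
  intro t ht x hx
  have h_sub : Set.Icc 0 t ⊆ Set.Icc 0 T := Set.Icc_subset_Icc_right ht.2
  have h_int_remainder : ∀ lam, IntervalIntegrable (fun s => R (q s) lam) volume 0 t := fun lam =>
    (intervalIntegrable_smul_iff_of_continuousOn (by fun_prop)
      fun _ _ => Complex.exp_ne_zero _).1 (h_int lam t ht)
  have h_transform := transform_eq_cexp_smul_sub_smul_integral ht.1
    (fun s hs => h_diag s (h_sub hs)) (fun lam s hs => (h_evol lam s (h_sub hs)).mono h_sub)
    h_int_remainder
  rw [← h_inv t ht x hx, h_transform, map_sub, map_smul, Pi.sub_apply, Pi.smul_apply,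
    h_control t ht x hx, smul_zero, sub_zero]

end TransformMethod

/-- Abstract transform-method theorem (§2.5 / Theorem 5.1): if `F` weakly diagonalizes
`L` with remainder `R` controlled by the inverse transform `G`, and `G` inverts `F` on
`(0,1)`, then the solution of `∂_t q + a L q = 0` is `q(t,x) = G(e^{-azt} F Q)(x)`. -/
theorem stmt15 (Λ : Type*) (a : ℂ) (z : Λ → ℂ) (T : ℝ) (hT : 0 < T)
    (F R : (ℝ → ℂ) →ₗ[ℂ] (Λ → ℂ))
    (L : (ℝ → ℂ) →ₗ[ℂ] (ℝ → ℂ))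
    (G : (Λ → ℂ) →ₗ[ℂ] (ℝ → ℂ))
    (q : ℝ → (ℝ → ℂ)) (Q : ℝ → ℂ) (hQ : Q = q 0)
    (h1 : ∀ t ∈ Set.Icc (0 : ℝ) T,
      F (L (q t)) = fun lam => z lam * F (q t) lam + R (q t) lam)
    (h2 : ∀ lam : Λ, ∀ t ∈ Set.Icc (0 : ℝ) T,
      HasDerivAt (fun s => F (q s) lam) (-a * F (L (q t)) lam) t)
    (h3 : ∀ lam : Λ, ∀ t ∈ Set.Icc (0 : ℝ) T,
      IntervalIntegrable (fun s => Complex.exp (a * z lam * s) * R (q s) lam) volume 0 t)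
    (h4 : ∀ t ∈ Set.Icc (0 : ℝ) T, ∀ x ∈ Set.Ioo (0 : ℝ) 1,
      G (fun lam => ∫ s in (0 : ℝ)..t, Complex.exp (a * z lam * (s - t)) * R (q s) lam) x
        = 0)
    (h5 : ∀ t ∈ Set.Icc (0 : ℝ) T, ∀ x ∈ Set.Ioo (0 : ℝ) 1, G (F (q t)) x = q t x) :
    ∀ t ∈ Set.Icc (0 : ℝ) T, ∀ x ∈ Set.Ioo (0 : ℝ) 1,
      q t x = G (fun lam => Complex.exp (-a * z lam * t) * F Q lam) x := by
  subst hQ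
  exact stmt15_general h1 (fun lam t ht => (h2 lam t ht).hasDerivWithinAt) h3 h4 h5
end

section
/- Let Λ be a type, a ∈ ℂ, z : Λ → ℂ, and T > 0. Let F and R be ℂ-linear maps from the space of functions ℝ → ℂ to the space of functions Λ → ℂ, let L be a ℂ-linear endomorphism of the space of functions ℝ → ℂ, and let G be a ℂ-linear map from the space of functions Λ → ℂ to the space of functions ℝ → ℂ. Let q : ℝ → (ℝ → ℂ), set Q = q(0), and let 𝒬 : ℝ → (ℝ → ℂ) and H : ℝ → (Λ → ℂ). Assume: (i) for every t ∈ [0,T], F(L(q t)) = (λ ↦ z(λ)·F(q t)(λ) + R(q t)(λ) + H(t)(λ)); (ii) for every λ ∈ Λ and every t ∈ [0,T], the function s ↦ F(q s)(λ) has derivative F(𝒬 t)(λ) − a · F(L(q t))(λ) at s = t; (iii) for every λ ∈ Λ and t ∈ [0,T], each of the functions s ↦ e^{a·z(λ)·s}·R(q s)(λ), s ↦ e^{a·z(λ)·s}·F(𝒬 s)(λ), s ↦ e^{a·z(λ)·s}·H(s)(λ) is integrable on [0,t]; (iv) for every t ∈ [0,T] and x ∈ (0,1), G(λ ↦ ∫₀ᵗ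 e^{a·z(λ)·(s−t)} · R(q s)(λ) ds)(x) = 0; (v) for every t ∈ [0,T] and x ∈ (0,1), G(F(q t))(x) = q t x. Then for every t ∈ [0,T] and every x ∈ (0,1): q t x = G(λ ↦ e^{−a·z(λ)·t}·F(Q)(λ))(x) + G(λ ↦ ∫₀ᵗ e^{a·z(λ)·(s−t)}·F(𝒬 s)(λ) ds)(x) − a · G(λ ↦ ∫₀ᵗ e^{a·z(λ)·(s−t)}·H(s)(λ) ds)(x). -/
open MeasureTheory

/-!
For each spectral parameter `λ`, the transform `f t = F (q t) λ` solves the scalar equation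
`f' + a z(λ) f = F (𝒬 t) λ - a (H t λ + R (q t) λ)`, because `F` diagonalizes `L` up to the
remainder `R` and the boundary term `H`. Differentiating `exp (a z(λ) (s - t)) f s` in `s` and
integrating over `[0, t]` (Duhamel's principle) expresses `F (q t)` as the evolved initial transform
plus one integral for each of the three sources. The inverse transform `G` is linear, recovers `q t`
from `F (q t)` and annihilates the integral of the remainder.
-/

section IntegratingFactor

variable {V : Type*} [NormedAddCommGroup V] [NormedSpace ℂ V]

theorem intervalIntegrable_exp_smul_iff {φ : ℝ → ℂ} (hφ : Continuous φ) {g : ℝ → V}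
    {μ : Measure ℝ} {t₀ t : ℝ} :
    IntervalIntegrable (fun s => Complex.exp (φ s) • g s) μ t₀ t ↔
      IntervalIntegrable g μ t₀ t where
  mp h := by
    have hinv : Continuous fun s => Complex.exp (-φ s) := by fun_prop
    simpa only [smul_smul, ← Complex.exp_add, neg_add_cancel, Complex.exp_zero, one_smul] using
      h.continuousOn_smul hinv.continuousOn
  mpr h := h.continuousOn_smul hφ.cexp.continuousOn

theorem integral_exp_smul_sub_smul {φ : ℝ → ℂ} (hφ : Continuous φ) {a : ℂ} {g h : ℝ → V}
    {μ : Measure ℝ} {t₀ t : ℝ} (hg : IntervalIntegrable g μ t₀ t)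
    (hh : IntervalIntegrable h μ t₀ t) :
    ∫ s in t₀..t, Complex.exp (φ s) • (g s - a • h s) ∂μ =
      (∫ s in t₀..t, Complex.exp (φ s) • g s ∂μ) -
        a • ∫ s in t₀..t, Complex.exp (φ s) • h s ∂μ := by
  have hφg := (intervalIntegrable_exp_smul_iff hφ).2 hg
  have hφh := (intervalIntegrable_exp_smul_iff hφ).2 hh
  simp only [smul_sub, smul_comm _ a]
  rw [← intervalIntegral.integral_smul]
  exact intervalIntegral.integral_sub hφg (hφh.smul a)

theorem hasDerivWithinAt_exp_sub_smul {c : ℂ} {τ s : ℝ} {f : ℝ → V} {v : V} {S : Set ℝ}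
    (hf : HasDerivWithinAt f (v - c • f s) S s) :
    HasDerivWithinAt (fun r : ℝ => Complex.exp (c * (r - τ)) • f r)
      (Complex.exp (c * (s - τ)) • v) S s := by
  have hexp : HasDerivWithinAt (fun r : ℝ => Complex.exp (c * (r - τ)))
      (Complex.exp (c * (s - τ)) * (c * 1)) S s :=
    (((hasDerivWithinAt_id s S).ofReal_comp.sub_const (τ : ℂ)).const_mul c).cexp
  refine (hexp.smul hf).congr_deriv ?_
  module

end IntegratingFactor

section Duhamel

variable {V : Type*} [NormedAddCommGroup V] [NormedSpace ℂ V] [CompleteSpace V] {t₀ t : ℝ}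

theorem integral_eq_sub_of_hasDerivWithinAt_uIcc {f f' : ℝ → V}
    (hf : ∀ s ∈ Set.uIcc t₀ t, HasDerivWithinAt f (f' s) (Set.uIcc t₀ t) s)
    (hf' : IntervalIntegrable f' volume t₀ t) :
    ∫ s in t₀..t, f' s = f t - f t₀ :=
  intervalIntegral.integral_eq_sub_of_hasDeriv_right (fun s hs => (hf s hs).continuousWithinAt)
    (fun s hs => ((hf s (Set.Ioo_subset_Icc_self hs)).hasDerivAt
      (Icc_mem_nhds hs.1 hs.2)).hasDerivWithinAt) hf'

theorem eq_exp_smul_add_integral_of_hasDerivWithinAt {c : ℂ} {f g : ℝ → V}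
    (hf : ∀ s ∈ Set.uIcc t₀ t, HasDerivWithinAt f (g s - c • f s) (Set.uIcc t₀ t) s)
    (hg : IntervalIntegrable g volume t₀ t) :
    f t = Complex.exp (c * (t₀ - t)) • f t₀ +
      ∫ s in t₀..t, Complex.exp (c * (s - t)) • g s := by
  rw [integral_eq_sub_of_hasDerivWithinAt_uIcc
    (fun s hs => hasDerivWithinAt_exp_sub_smul (hf s hs))
    ((intervalIntegrable_exp_smul_iff (by fun_prop)).2 hg)]
  simp only [sub_self, mul_zero, Complex.exp_zero, one_smul, add_sub_cancel]

theorem eq_exp_smul_add_integral_sub_smul_integral {a z : ℂ} {f g h r : ℝ → V}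
    (hf : ∀ s ∈ Set.uIcc t₀ t,
      HasDerivWithinAt f (g s - a • (z • f s + r s + h s)) (Set.uIcc t₀ t) s)
    (hg : IntervalIntegrable g volume t₀ t) (hh : IntervalIntegrable h volume t₀ t)
    (hr : IntervalIntegrable r volume t₀ t) :
    f t = Complex.exp (a * z * (t₀ - t)) • f t₀ +
      (∫ s in t₀..t, Complex.exp (a * z * (s - t)) • g s) -
      a • (∫ s in t₀..t, Complex.exp (a * z * (s - t)) • h s) -
      a • (∫ s in t₀..t, Complex.exp (a * z * (s - t)) • r s) := by
  have hf' : ∀ s ∈ Set.uIcc t₀ t, HasDerivWithinAt f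
      ((g s - a • h s - a • r s) - (a * z) • f s) (Set.uIcc t₀ t) s := fun s hs =>
    (hf s hs).congr_deriv (by module)
  have hexp : Continuous fun s : ℝ => a * z * ((s : ℂ) - t) := by fun_prop
  have hgh : IntervalIntegrable (fun s => g s - a • h s) volume t₀ t := hg.sub (hh.smul a)
  rw [eq_exp_smul_add_integral_of_hasDerivWithinAt hf' (hgh.sub (hr.smul a)),
    integral_exp_smul_sub_smul hexp hgh hr, integral_exp_smul_sub_smul hexp hg hh]
  abel

end Duhamel

theorem stmt16_general {Λ X V W : Type*} [NormedAddCommGroup V] [NormedSpace ℂ V]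
    [CompleteSpace V] [AddCommGroup W] [Module ℂ W] (a : ℂ) (z : Λ → ℂ) (T : ℝ) (S : Set X)
    (F R : (X → W) → (Λ → V)) (L : (X → W) → (X → W)) (G : (Λ → V) →ₗ[ℂ] (X → W))
    (q 𝒬 : ℝ → (X → W)) (H : ℝ → (Λ → V))
    (h1 : ∀ t ∈ Set.Icc (0 : ℝ) T,
      F (L (q t)) = fun lam => z lam • F (q t) lam + R (q t) lam + H t lam)
    (h2 : ∀ lam : Λ, ∀ t ∈ Set.Icc (0 : ℝ) T, HasDerivWithinAt (fun s => F (q s) lam)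
      (F (𝒬 t) lam - a • F (L (q t)) lam) (Set.Icc 0 T) t)
    (h3 : ∀ lam : Λ, ∀ t ∈ Set.Icc (0 : ℝ) T,
      IntervalIntegrable (fun s : ℝ => Complex.exp (a * z lam * s) • R (q s) lam) volume 0 t ∧
      IntervalIntegrable (fun s : ℝ => Complex.exp (a * z lam * s) • F (𝒬 s) lam) volume 0 t ∧
      IntervalIntegrable (fun s : ℝ => Complex.exp (a * z lam * s) • H s lam) volume 0 t)
    (h4 : ∀ t ∈ Set.Icc (0 : ℝ) T, ∀ x ∈ S,
      G (fun lam => ∫ s in (0 : ℝ)..t, Complex.exp (a * z lam * (s - t)) • R (q s) lam) x = 0)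
    (h5 : ∀ t ∈ Set.Icc (0 : ℝ) T, ∀ x ∈ S, G (F (q t)) x = q t x) :
    ∀ t ∈ Set.Icc (0 : ℝ) T, ∀ x ∈ S,
      q t x =
        G (fun lam => Complex.exp (-a * z lam * t) • F (q 0) lam) x +
        G (fun lam => ∫ s in (0 : ℝ)..t, Complex.exp (a * z lam * (s - t)) • F (𝒬 s) lam) x -
        a • G (fun lam => ∫ s in (0 : ℝ)..t, Complex.exp (a * z lam * (s - t)) • H s lam) x := by
  intro t ht x hx
  have transform_eq : F (q t) =
      (fun lam => Complex.exp (-a * z lam * t) • F (q 0) lam) +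
      (fun lam => ∫ s in (0 : ℝ)..t, Complex.exp (a * z lam * (s - t)) • F (𝒬 s) lam) -
      a • (fun lam => ∫ s in (0 : ℝ)..t, Complex.exp (a * z lam * (s - t)) • H s lam) -
      a • (fun lam => ∫ s in (0 : ℝ)..t, Complex.exp (a * z lam * (s - t)) • R (q s) lam) := by
    funext lam
    have hsub : Set.uIcc 0 t ⊆ Set.Icc 0 T :=
      Set.uIcc_of_le ht.1 ▸ Set.Icc_subset_Icc_right ht.2
    have hderiv : ∀ s ∈ Set.uIcc 0 t, HasDerivWithinAt (fun s => F (q s) lam)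
        (F (𝒬 s) lam - a • (z lam • F (q s) lam + R (q s) lam + H s lam)) (Set.uIcc 0 t) s :=
      fun s hs => congrFun (h1 s (hsub hs)) lam ▸ (h2 lam s (hsub hs)).mono hsub
    have ⟨hR, h𝒬, hH⟩ := h3 lam t ht
    have hexp : a * z lam * ((0 : ℝ) - t) = -a * z lam * t := by push_cast; ring
    have unweight : ∀ {g : ℝ → V},
        IntervalIntegrable (fun s : ℝ => Complex.exp (a * z lam * s) • g s) volume 0 t →
          IntervalIntegrable g volume 0 t := (intervalIntegrable_exp_smul_iff (by fun_prop)).1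
    simpa only [hexp] using!
      eq_exp_smul_add_integral_sub_smul_integral hderiv (unweight h𝒬) (unweight hH) (unweight hR)
  rw [← h5 t ht x hx, transform_eq]
  simp only [map_add, map_sub, map_smul, Pi.add_apply, Pi.sub_apply, Pi.smul_apply, h4 t ht x hx,
    smul_zero, sub_zero]

/-- Abstract inhomogeneous transform-method theorem (Theorem 6.3): solution
representation for `∂_t q + a𝓛q = 𝒬` with inhomogeneous boundary term `H`. -/
theorem stmt16 (Λ : Type*) (a : ℂ) (z : Λ → ℂ) (T : ℝ) (hT : 0 < T)
    (F R : (ℝ → ℂ) →ₗ[ℂ] (Λ → ℂ))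
    (L : (ℝ → ℂ) →ₗ[ℂ] (ℝ → ℂ))
    (G : (Λ → ℂ) →ₗ[ℂ] (ℝ → ℂ))
    (q : ℝ → (ℝ → ℂ)) (Q : ℝ → ℂ) (hQ : Q = q 0)
    (𝒬 : ℝ → (ℝ → ℂ)) (H : ℝ → (Λ → ℂ))
    (h1 : ∀ t ∈ Set.Icc (0 : ℝ) T,
      F (L (q t)) = fun lam => z lam * F (q t) lam + R (q t) lam + H t lam)
    (h2 : ∀ lam : Λ, ∀ t ∈ Set.Icc (0 : ℝ) T,
      HasDerivAt (fun s => F (q s) lam) (F (𝒬 t) lam - a * F (L (q t)) lam) t)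
    (h3 : ∀ lam : Λ, ∀ t ∈ Set.Icc (0 : ℝ) T,
      IntervalIntegrable (fun s => Complex.exp (a * z lam * s) * R (q s) lam)
        volume 0 t ∧
      IntervalIntegrable (fun s => Complex.exp (a * z lam * s) * F (𝒬 s) lam)
        volume 0 t ∧
      IntervalIntegrable (fun s => Complex.exp (a * z lam * s) * H s lam) volume 0 t)
    (h4 : ∀ t ∈ Set.Icc (0 : ℝ) T, ∀ x ∈ Set.Ioo (0 : ℝ) 1,
      G (fun lam => ∫ s in (0 : ℝ)..t, Complex.exp (a * z lam * (s - t)) * R (q s) lam) x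
        = 0)
    (h5 : ∀ t ∈ Set.Icc (0 : ℝ) T, ∀ x ∈ Set.Ioo (0 : ℝ) 1, G (F (q t)) x = q t x) :
    ∀ t ∈ Set.Icc (0 : ℝ) T, ∀ x ∈ Set.Ioo (0 : ℝ) 1,
      q t x =
        G (fun lam => Complex.exp (-a * z lam * t) * F Q lam) x +
        G (fun lam =>
          ∫ s in (0 : ℝ)..t, Complex.exp (a * z lam * (s - t)) * F (𝒬 s) lam) x -
        a * G (fun lam =>
          ∫ s in (0 : ℝ)..t, Complex.exp (a * z lam * (s - t)) * H s lam) x := by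
  subst hQ
  exact stmt16_general a z T _ F R L G q 𝒬 H h1
    (fun lam t ht => (h2 lam t ht).hasDerivWithinAt) h3 h4 h5
end
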